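/- arXiv:2506.09434 — 5 statements merged into one kernel-verified Lean document; each statement's English description precedes it below -/
import Mathlib

section
/- Let N, M ≥ 2 and suppose every task-level aggregator T_j is Schur-concave. Then for every admissible allocation A = (r_{ij}), the admissible homogeneous allocation A' whose every row equals (s_1/N,…,s_M/N), where s_j = Σ_{i=1}^N r_{ij}, satisfies R(A') ≥ R(A). Consequently R_het = R_hom and the heterogeneity gain ΔR equals 0. -/
open Finset

/-- An N×M allocation matrix is admissible if all entries are nonnegative and
every agent's (row's) efforts sum to 1. -/
def Admissible {N M : ℕ} (A : Fin N → Fin M → ℝ) : Prop :=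
  (∀ i j, 0 ≤ A i j) ∧ ∀ i, ∑ j, A i j = 1

/-- An allocation is homogeneous if all rows coincide. -/
def Homogeneous {N M : ℕ} (A : Fin N → Fin M → ℝ) : Prop :=
  ∀ i i' : Fin N, A i = A i'

/-- The column of task `j`. -/
def col {N M : ℕ} (A : Fin N → Fin M → ℝ) (j : Fin M) : Fin N → ℝ :=
  fun i => A i j

/-- `x` majorizes `y`: equal total sums, and every partial sum of entries
of `y` is dominated by a partial sum of entries of `x` of the same size
(equivalently, the sum of the m largest entries of x dominates that of y). -/
def Majorizes {k : ℕ} (x y : Fin k → ℝ) : Prop :=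
  (∑ i, x i = ∑ i, y i) ∧
    ∀ t : Finset (Fin k), ∃ s : Finset (Fin k), s.card = t.card ∧ ∑ i ∈ t, y i ≤ ∑ i ∈ s, x i

/-- `x` is a permutation (rearrangement) of `y`. -/
def IsPermOf {k : ℕ} (x y : Fin k → ℝ) : Prop :=
  ∃ σ : Equiv.Perm (Fin k), x = y ∘ σ

/-- A function of a finite real vector is symmetric if it is permutation invariant. -/
def SymmFun {k : ℕ} (f : (Fin k → ℝ) → ℝ) : Prop :=
  ∀ (σ : Equiv.Perm (Fin k)) (x : Fin k → ℝ), f (x ∘ σ) = f x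

/-- Schur-concavity: symmetric and antitone with respect to majorization. -/
def SchurConcave {k : ℕ} (f : (Fin k → ℝ) → ℝ) : Prop :=
  SymmFun f ∧ ∀ x y : Fin k → ℝ, Majorizes x y → f x ≤ f y

/-- Team reward `R(A) = U(T_1(a_1), …, T_M(a_M))`. -/
def Reward {N M : ℕ} (U : (Fin M → ℝ) → ℝ) (T : Fin M → (Fin N → ℝ) → ℝ)
    (A : Fin N → Fin M → ℝ) : ℝ :=
  U fun j => T j (col A j)

/-!
The translates `t + g` of a set `t` of coordinates cover every coordinate equally often, so the
sums of a vector `x` over them average to `#t` times the mean of `x`, and some translate does at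
least that well. Hence `x` majorizes the constant vector of its mean. Replacing every column of an
allocation by its mean therefore lowers no task value and, `U` being monotone, not the reward: every
allocation is matched or beaten by a homogeneous one.
-/

section Translates

variable {G K : Type*} [AddGroup G] [Fintype G] [AddCommMonoid K]

theorem sum_sum_add_right_eq_card_nsmul_sum (x : G → K) (t : Finset G) :
    ∑ g, ∑ i ∈ t, x (i + g) = #t • ∑ g, x g := by
  have sum_translate (i : G) : ∑ g, x (i + g) = ∑ g, x g := Equiv.sum_comp (Equiv.addLeft i) x
  rw [sum_comm, sum_congr rfl fun i _ => sum_translate i, sum_const]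

theorem exists_card_nsmul_sum_le_card_nsmul_sum_add_right [LinearOrder K]
    [IsOrderedCancelAddMonoid K] (x : G → K) (t : Finset G) :
    ∃ g, #t • ∑ i, x i ≤ Fintype.card G • ∑ i ∈ t, x (i + g) := by
  have hsum : ∑ _g : G, #t • ∑ i, x i = ∑ g, Fintype.card G • ∑ i ∈ t, x (i + g) := by
    rw [sum_const, card_univ, sum_nsmul, sum_sum_add_right_eq_card_nsmul_sum, nsmul_left_comm]
  obtain ⟨g, -, hg⟩ := exists_le_of_sum_le univ_nonempty hsum.le
  exact ⟨g, hg⟩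

end Translates

theorem majorizes_const_mean {k : ℕ} (x : Fin k → ℝ) :
    Majorizes x fun _ => (∑ i, x i) / k := by
  obtain rfl | hk := eq_zero_or_neZero k
  · exact ⟨by simp, fun t => ⟨t, rfl, by simp [eq_empty_of_isEmpty t]⟩⟩
  have hk_pos : (0 : ℝ) < k := Nat.cast_pos.mpr (NeZero.pos k)
  refine ⟨by simp [mul_div_cancel₀ _ hk_pos.ne'], fun t => ?_⟩
  obtain ⟨g, hg⟩ := exists_card_nsmul_sum_le_card_nsmul_sum_add_right x t
  rw [Fintype.card_fin] at hg
  refine ⟨t.map (Equiv.addRight g).toEmbedding, card_map _, ?_⟩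
  calc ∑ _i ∈ t, (∑ i, x i) / k = (#t • ∑ i, x i) / k := by
        rw [sum_const, nsmul_eq_mul, nsmul_eq_mul, mul_div_assoc]
    _ ≤ ∑ i ∈ t, x (i + g) := by
        rwa [div_le_iff₀' hk_pos, ← nsmul_eq_mul]
    _ = ∑ i ∈ t.map (Equiv.addRight g).toEmbedding, x i :=
        (sum_map t (Equiv.addRight g).toEmbedding x).symm

theorem SchurConcave.le_const_mean {k : ℕ} {f : (Fin k → ℝ) → ℝ} (hf : SchurConcave f)
    (x : Fin k → ℝ) : f x ≤ f fun _ => (∑ i, x i) / k :=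
  hf.2 _ _ (majorizes_const_mean x)

section Allocations

variable {N M : ℕ} {A : Fin N → Fin M → ℝ} {U : (Fin M → ℝ) → ℝ} {T : Fin M → (Fin N → ℝ) → ℝ}

/-- The homogeneous allocation `A'` obtained from `A` by giving every agent the average row
`(s_1/N, …, s_M/N)`. -/
noncomputable def homogenize (A : Fin N → Fin M → ℝ) : Fin N → Fin M → ℝ :=
  fun _ j => (∑ i, A i j) / N

/-- The optimal reward `R_het` over all admissible allocations; as a real `sSup`, it is `0` when
these rewards are unbounded above. -/
noncomputable def hetReward (U : (Fin M → ℝ) → ℝ) (T : Fin M → (Fin N → ℝ) → ℝ) : ℝ :=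
  sSup {r : ℝ | ∃ B : Fin N → Fin M → ℝ, Admissible B ∧ Reward U T B = r}

/-- The optimal reward `R_hom` over admissible homogeneous allocations, with the same convention
as `hetReward` for unbounded rewards. -/
noncomputable def homReward (U : (Fin M → ℝ) → ℝ) (T : Fin M → (Fin N → ℝ) → ℝ) : ℝ :=
  sSup {r : ℝ | ∃ B : Fin N → Fin M → ℝ, Admissible B ∧ Homogeneous B ∧ Reward U T B = r}

theorem homogeneous_homogenize (A : Fin N → Fin M → ℝ) : Homogeneous (homogenize A) :=
  fun _ _ => rfl

theorem Admissible.homogenize (hA : Admissible A) : Admissible (homogenize A) := by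
  refine ⟨fun _ j => div_nonneg (sum_nonneg fun i _ => hA.1 i j) N.cast_nonneg, fun i => ?_⟩
  have hN : (N : ℝ) ≠ 0 := Nat.cast_ne_zero.mpr i.pos.ne'
  calc ∑ j, (∑ i, A i j) / N = (∑ i, ∑ j, A i j) / N := by rw [← sum_div, sum_comm]
    _ = 1 := by simp [hA.2, hN]

theorem reward_le_reward_homogenize (hT : ∀ j x, T j x ≤ T j fun _ => (∑ i, x i) / N)
    (hU : Monotone U) (A : Fin N → Fin M → ℝ) : Reward U T A ≤ Reward U T (homogenize A) :=
  hU fun j => hT j (col A j)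

theorem hetReward_eq_homReward (hT : ∀ j x, T j x ≤ T j fun _ => (∑ i, x i) / N)
    (hU : Monotone U) : hetReward U T = homReward U T := by
  -- Mutual domination gives equal suprema even when the rewards are unbounded above.
  apply csSup_eq_csSup_of_forall_exists_le
  · rintro _ ⟨B, hB, rfl⟩
    exact ⟨_, ⟨homogenize B, hB.homogenize, homogeneous_homogenize B, rfl⟩,
      reward_le_reward_homogenize hT hU B⟩
  · rintro _ ⟨B, hB, -, rfl⟩
    exact ⟨_, ⟨B, hB, rfl⟩, le_rfl⟩

theorem stmt1_general (hT : ∀ j x, T j x ≤ T j fun _ => (∑ i, x i) / N) (hU : Monotone U) :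
    (∀ A : Fin N → Fin M → ℝ, Admissible A →
        Admissible (homogenize A) ∧ Homogeneous (homogenize A) ∧
        Reward U T A ≤ Reward U T (homogenize A)) ∧
      hetReward U T = homReward U T ∧ hetReward U T - homReward U T = 0 :=
  have hgain := hetReward_eq_homReward hT hU
  ⟨fun A hA => ⟨hA.homogenize, homogeneous_homogenize A, reward_le_reward_homogenize hT hU A⟩,
    hgain, sub_eq_zero.mpr hgain⟩

end Allocations

/-- No heterogeneity gain via Schur-concave inner aggregators:
if each `T j` is Schur-concave (and `U` is symmetric and non-decreasing in each
coordinate), then for every admissible `A` the homogeneous allocation whose rows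
all equal `(s_1/N, …, s_M/N)` (column averages) is admissible and does at least
as well; consequently `R_het = R_hom` and `ΔR = 0`. -/
theorem stmt1 {N M : ℕ} (hN : 2 ≤ N) (hM : 2 ≤ M)
    (T : Fin M → (Fin N → ℝ) → ℝ) (U : (Fin M → ℝ) → ℝ)
    (hT : ∀ j, SchurConcave (T j)) (hUmono : Monotone U) (hUsymm : SymmFun U) :
    (∀ A : Fin N → Fin M → ℝ, Admissible A →
        Admissible (fun (_ : Fin N) (j : Fin M) => (∑ i, A i j) / N) ∧
        Homogeneous (fun (_ : Fin N) (j : Fin M) => (∑ i, A i j) / N) ∧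
        Reward U T A ≤ Reward U T (fun (_ : Fin N) (j : Fin M) => (∑ i, A i j) / N)) ∧
      sSup {r : ℝ | ∃ B : Fin N → Fin M → ℝ, Admissible B ∧ Reward U T B = r} =
        sSup {r : ℝ | ∃ B : Fin N → Fin M → ℝ,
          Admissible B ∧ Homogeneous B ∧ Reward U T B = r} ∧
      sSup {r : ℝ | ∃ B : Fin N → Fin M → ℝ, Admissible B ∧ Reward U T B = r} -
        sSup {r : ℝ | ∃ B : Fin N → Fin M → ℝ,
          Admissible B ∧ Homogeneous B ∧ Reward U T B = r} = 0 :=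
  stmt1_general (fun j => (hT j).le_const_mean) hUmono
end

section
/- Let N = M ≥ 2 and consider the softmax reward with inner temperature t and outer temperature τ. If t ≤ 0, then for every τ ∈ ℝ the heterogeneity gain satisfies ΔR(t,τ;N) = 0. -/
open Finset

/-- Softmax inner aggregator with temperature `t`: the task score
`T_j(A) = Σ_i (e^{t·r_{ij}} / Σ_ℓ e^{t·r_{ℓj}}) · r_{ij}` applied to a column. -/
noncomputable def innerScore (t : ℝ) {N : ℕ} (a : Fin N → ℝ) : ℝ :=
  ∑ i, Real.exp (t * a i) / (∑ l, Real.exp (t * a l)) * a i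

/-- Softmax team reward with inner temperature `t` and outer temperature `τ`:
`R(A) = Σ_j (e^{τ·T_j} / Σ_ℓ e^{τ·T_ℓ}) · T_j`. -/
noncomputable def softReward (t τ : ℝ) {N : ℕ} (A : Fin N → Fin N → ℝ) : ℝ :=
  ∑ j, Real.exp (τ * innerScore t (col A j)) /
      (∑ l, Real.exp (τ * innerScore t (col A l))) * innerScore t (col A j)

/-- `σ(t,N) = e^t / (e^t + N − 1)`. -/
noncomputable def sigma' (t : ℝ) (N : ℕ) : ℝ :=
  Real.exp t / (Real.exp t + N - 1)

/-- Heterogeneity gain `ΔR(t,τ;N) = R_het − R_hom` for the softmax reward. -/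
noncomputable def hetGain (t τ : ℝ) (N : ℕ) : ℝ :=
  sSup {r : ℝ | ∃ A : Fin N → Fin N → ℝ, Admissible A ∧ softReward t τ A = r} -
    sSup {r : ℝ | ∃ A : Fin N → Fin N → ℝ,
      Admissible A ∧ Homogeneous A ∧ softReward t τ A = r}

/-!
For `t ≤ 0` the softmax weights decrease in the entries they weight, so by Chebyshev's sum
inequality each task score is at most the mean of its column; hence the scores sum to at most `1`.
A softmax average commutes with adding a constant, so sharing the missing mass equally among the
tasks turns the scores into a probability vector `p` without lowering the outer softmax average.
If every agent uses `p` as its row, the task scores are exactly `p`.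
-/

section InnerScore

variable {N : ℕ}

lemma innerScore_eq_sum_div_sum (t : ℝ) (a : Fin N → ℝ) :
    innerScore t a = (∑ i, Real.exp (t * a i) * a i) / ∑ i, Real.exp (t * a i) := by
  simp only [innerScore, div_mul_eq_mul_div, sum_div]

lemma innerScore_nonneg (t : ℝ) {a : Fin N → ℝ} (ha : ∀ i, 0 ≤ a i) : 0 ≤ innerScore t a :=
  sum_nonneg fun i _ => mul_nonneg (by positivity) (ha i)

variable [NeZero N]

lemma sum_exp_pos (a : Fin N → ℝ) : 0 < ∑ i, Real.exp (a i) :=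
  sum_pos (fun _ _ => Real.exp_pos _) univ_nonempty

lemma innerScore_add_const (t : ℝ) (a : Fin N → ℝ) (c : ℝ) :
    innerScore t (fun i => a i + c) = innerScore t a + c := by
  have hsum := (sum_exp_pos fun i => t * a i).ne'
  simp only [innerScore_eq_sum_div_sum, mul_add, Real.exp_add, sum_add_distrib,
    ← sum_mul, mul_right_comm _ (Real.exp (t * c))]
  field_simp

lemma innerScore_const (t c : ℝ) : innerScore t (fun _ : Fin N => c) = c := by
  simpa [innerScore] using innerScore_add_const t (fun _ : Fin N => 0) c

lemma innerScore_le_mean {t : ℝ} (ht : t ≤ 0) (a : Fin N → ℝ) :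
    innerScore t a ≤ (∑ i, a i) / N := by
  have hanti : Antivary (fun i => Real.exp (t * a i)) a := fun _ _ h =>
    Real.exp_le_exp.2 (mul_le_mul_of_nonpos_left h.le ht)
  have hchebyshev : N * ∑ i, Real.exp (t * a i) * a i ≤ (∑ i, Real.exp (t * a i)) * ∑ i, a i := by
    simpa only [Fintype.card_fin] using hanti.card_mul_sum_le_sum_mul_sum
  rw [innerScore_eq_sum_div_sum,
    div_le_div_iff₀ (sum_exp_pos _) (Nat.cast_pos.2 (NeZero.pos N))]
  linarith

lemma exists_mem_stdSimplex_innerScore_le (τ : ℝ) {T : Fin N → ℝ} (hT : ∀ j, 0 ≤ T j)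
    (hsum : ∑ j, T j ≤ 1) : ∃ p ∈ stdSimplex ℝ (Fin N), innerScore τ T ≤ innerScore τ p := by
  set c : ℝ := (1 - ∑ j, T j) / N with hc
  have hc_nonneg : 0 ≤ c := div_nonneg (sub_nonneg.2 hsum) N.cast_nonneg
  have hmass : ∑ j, (T j + c) = 1 := by
    have hN : (N : ℝ) ≠ 0 := NeZero.ne _
    simp only [sum_add_distrib, sum_const, card_univ, Fintype.card_fin,
      nsmul_eq_mul, hc]
    field_simp
    ring
  refine ⟨fun j => T j + c, ⟨fun j => add_nonneg (hT j) hc_nonneg, hmass⟩, ?_⟩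
  rw [innerScore_add_const]
  exact le_add_of_nonneg_right hc_nonneg

end InnerScore

section Allocation

variable {N M : ℕ}

lemma admissible_const {p : Fin M → ℝ} (hp : p ∈ stdSimplex ℝ (Fin M)) :
    Admissible fun _ : Fin N => p :=
  ⟨fun _ => hp.1, fun _ => hp.2⟩

variable [NeZero N]

lemma Admissible.sum_innerScore_col_le_one {t : ℝ} (ht : t ≤ 0) {A : Fin N → Fin M → ℝ}
    (hA : Admissible A) : ∑ j, innerScore t (col A j) ≤ 1 :=
  calc ∑ j, innerScore t (col A j)
      ≤ ∑ j, (∑ i, A i j) / N := sum_le_sum fun j _ => innerScore_le_mean ht (col A j)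
    _ = (∑ i, ∑ j, A i j) / N := by rw [← sum_div, sum_comm]
    _ = 1 := by simp [hA.2]

lemma softReward_const (t τ : ℝ) (p : Fin N → ℝ) :
    softReward t τ (fun _ => p) = innerScore τ p := by
  have hscore (j : Fin N) : innerScore t (col (fun _ : Fin N => p) j) = p j :=
    innerScore_const t (p j)
  exact congrArg (innerScore τ) (funext hscore)

lemma Admissible.exists_homogeneous_softReward_le {t : ℝ} (ht : t ≤ 0) (τ : ℝ)
    {A : Fin N → Fin N → ℝ} (hA : Admissible A) :
    ∃ B : Fin N → Fin N → ℝ,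
      Admissible B ∧ Homogeneous B ∧ softReward t τ A ≤ softReward t τ B := by
  obtain ⟨p, hp, hle⟩ := exists_mem_stdSimplex_innerScore_le τ
    (fun j => innerScore_nonneg t (a := col A j) fun i => hA.1 i j)
    (hA.sum_innerScore_col_le_one ht)
  exact ⟨fun _ => p, admissible_const hp, fun _ _ => rfl,
    hle.trans_eq (softReward_const t τ p).symm⟩

end Allocation

/-- Softmax heterogeneity gain, `t ≤ 0` case: for `N = M ≥ 2`,
if the inner temperature satisfies `t ≤ 0`, then `ΔR(t,τ;N) = 0` for every `τ`. -/
theorem stmt3 (N : ℕ) (hN : 2 ≤ N) (t τ : ℝ) (ht : t ≤ 0) :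
    hetGain t τ N = 0 := by
  have : NeZero N := ⟨by lia⟩
  refine sub_eq_zero.2 (csSup_eq_csSup_of_forall_exists_le ?_ ?_)
  · rintro _ ⟨A, hA, rfl⟩
    obtain ⟨B, hB, hhom, hle⟩ := hA.exists_homogeneous_softReward_le ht τ
    exact ⟨_, ⟨B, hB, hhom, rfl⟩, hle⟩
  · rintro _ ⟨A, hA, -, rfl⟩
    exact ⟨_, ⟨A, hA, rfl⟩, le_rfl⟩
end

section
/- Let N, M ≥ 2. Let g : [0,1] → ℝ≥0 be strictly convex with g(0) = 0, and let h : ℝ≥0 → ℝ be strictly concave, increasing, with h(0) = 0. Define the task-level aggregators T_j(a_j) = Σ_{i=1}^N g(r_{ij}) and the outer aggregator U(y_1,…,y_M) = Σ_{j=1}^M h(y_j), so the team reward is R(A) = Σ_{j=1}^M h(Σ_{i=1}^N g(r_{ij})). Then the heterogeneity gain satisfies ΔR > 0, i.e., there is an admissible allocation whose reward strictly exceeds the reward of every admissible homogeneous allocation. -/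
open Finset

/-!
Write `N` and `M` for the numbers of agents and tasks. If two tasks receive efforts `x < y` in a
homogeneous allocation, let a single agent swap its efforts on them: this transfers `g y - g x` of
output from the richer to the poorer task, which is a strict gain because `h` is strictly concave.
By concavity the gain only grows when `x` decreases and `y` increases, so it is bounded below by
some `ε > 0` as soon as `x ≤ 1 / M` and `1 / M + δ ≤ y`. The remaining homogeneous allocations have
all efforts below `1 / M + δ`. By monotonicity and continuity, for small `δ` they are beaten by one
fixed allocation, any non-homogeneous one whose mean row is uniform: by Jensen's inequality for `g`
it strictly beats the uniform allocation. A homogeneous allocation with reward within `ε` of the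
supremum then yields the required allocation, whether or not the supremum is attained.
-/

open Filter Topology

section ConvexFunctions

variable {s : Set ℝ} {f : ℝ → ℝ}

lemma strictMonoOn_of_strictConvexOn_of_isMinOn (hf : StrictConvexOn ℝ s f) {a : ℝ}
    (ha : IsLeast s a) (hmin : IsMinOn f s a) : StrictMonoOn f s := by
  intro x hx y hy hxy
  have hay : a < y := (ha.2 hx).trans_lt hxy
  have hlt : f a < f y := (hmin hy).lt_of_ne fun heq =>
    hay.ne (hf.eq_of_isMinOn hmin (fun z hz => heq ▸ hmin hz) ha.1 hy)
  rcases (ha.2 hx).eq_or_lt with rfl | hax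
  · exact hlt
  · have hmem : x ∈ openSegment ℝ a y := openSegment_eq_Ioo hay ▸ ⟨hax, hxy⟩
    simpa only [max_eq_right hlt.le] using hf.lt_on_openSegment ha.1 hy hay.ne hmem

lemma strictMonoOn_of_strictConcaveOn_of_monotoneOn (hf : StrictConcaveOn ℝ s f)
    (hmono : MonotoneOn f s) : StrictMonoOn f s := by
  intro x hx y hy hxy
  refine (hmono hx hy hxy.le).lt_of_ne fun heq => hxy.ne ?_
  have hsub : Set.Icc x y ⊆ s := hf.1.ordConnected.out hx hy
  have hmax : IsMaxOn f (Set.Icc x y) y := fun z hz => hmono (hsub hz) hy hz.2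
  exact (hf.subset hsub (convex_Icc x y)).eq_of_isMaxOn (fun z hz => heq ▸ hmax hz) hmax
    (Set.left_mem_Icc.2 hxy.le) (Set.right_mem_Icc.2 hxy.le)

lemma add_le_add_of_concaveOn_of_mem_Icc (hf : ConcaveOn ℝ s f) {x y z w : ℝ} (hx : x ∈ s)
    (hw : w ∈ s) (hy : y ∈ Set.Icc x w) (hsum : x + w = y + z) : f x + f w ≤ f y + f z := by
  obtain ⟨a, b, ha, hb, hab, rfl⟩ := (Convex.mem_Icc (hy.1.trans hy.2)).1 hy
  obtain rfl : z = b * x + a * w := by linear_combination -hsum - (x + w) * hab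
  have hy' := hf.2 hx hw ha hb hab
  have hz' := hf.2 hx hw hb ha (by rwa [add_comm])
  simp only [smul_eq_mul] at hy' hz'
  linear_combination hy' + hz' - (f x + f w) * hab

lemma add_lt_add_of_strictConcaveOn_of_mem_Ioo (hf : StrictConcaveOn ℝ s f) {x y z w : ℝ}
    (hx : x ∈ s) (hw : w ∈ s) (hy : y ∈ Set.Ioo x w) (hsum : x + w = y + z) :
    f x + f w < f y + f z := by
  have hxw : x < w := hy.1.trans hy.2
  obtain ⟨a, b, ha, hb, hab, rfl⟩ := (Convex.mem_Ioo hxw).1 hy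
  obtain rfl : z = b * x + a * w := by linear_combination -hsum - (x + w) * hab
  have hy' := hf.2 hx hw hxw.ne ha hb hab
  have hz' := hf.2 hx hw hxw.ne hb ha (by rwa [add_comm])
  simp only [smul_eq_mul] at hy' hz'
  linear_combination hy' + hz' - (f x + f w) * hab

/-- The change of `f x + f y` when an amount `d` is transferred from `y` to `x`; it measures the
effect of rebalancing the outputs of two tasks. -/
def transferGain (f : ℝ → ℝ) (x y d : ℝ) : ℝ :=
  f (x + d) + f (y - d) - (f x + f y)

lemma transferGain_pos (hf : StrictConcaveOn ℝ s f) {x y d : ℝ} (hx : x ∈ s) (hy : y ∈ s)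
    (hd : 0 < d) (hdxy : d < y - x) : 0 < transferGain f x y d :=
  sub_pos.2 <| add_lt_add_of_strictConcaveOn_of_mem_Ioo hf hx hy
    ⟨by linarith, by linarith⟩ (by ring)

/-- The condition `d + e ≤ v - u` says that transferring `e` instead of `d` between `u` and `v`
does not overshoot their balance. -/
lemma transferGain_mono (hf : ConcaveOn ℝ s f) {p q d u v e : ℝ} (hu : u ∈ s) (hv : v ∈ s)
    (hup : u ≤ p) (hqv : q ≤ v) (hd : 0 ≤ d) (hdpq : d ≤ q - p) (hde : d ≤ e)
    (heuv : d + e ≤ v - u) : transferGain f p q d ≤ transferGain f u v e := by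
  have mem {x : ℝ} (hux : u ≤ x) (hxv : x ≤ v) : x ∈ s := hf.1.ordConnected.out hu hv ⟨hux, hxv⟩
  have hpoor : f u + f (p + d) ≤ f p + f (u + d) :=
    add_le_add_of_concaveOn_of_mem_Icc hf hu (mem (by linarith) (by linarith))
      ⟨hup, by linarith⟩ (by ring)
  have hrich : f (q - d) + f v ≤ f q + f (v - d) :=
    add_le_add_of_concaveOn_of_mem_Icc hf (mem (by linarith) (by linarith)) hv
      ⟨by linarith, hqv⟩ (by ring)
  have hamount : f (u + d) + f (v - d) ≤ f (u + e) + f (v - e) :=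
    add_le_add_of_concaveOn_of_mem_Icc hf (mem (by linarith) (by linarith))
      (mem (by linarith) (by linarith)) ⟨by linarith, by linarith⟩ (by ring)
  unfold transferGain
  linarith

end ConvexFunctions

lemma exists_forall_lt_of_gap {α β : Type*} {f : α → ℝ} {F : β → ℝ} {S : Set α} {T : Set β}
    (hbdd : BddAbove (f '' S)) {ε : ℝ} (hε : 0 < ε) {b₀ : β} (hb₀ : b₀ ∈ T)
    (hgap : ∀ a ∈ S, F b₀ ≤ f a → ∃ b ∈ T, f a + ε ≤ F b) :
    ∃ b ∈ T, ∀ a ∈ S, f a < F b := by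
  rcases {a ∈ S | F b₀ ≤ f a}.eq_empty_or_nonempty with hempty | hne
  · exact ⟨b₀, hb₀, fun a ha => not_le.1 fun hle => Set.eq_empty_iff_forall_notMem.1 hempty a
      ⟨ha, hle⟩⟩
  · obtain ⟨_, ⟨a₀, ⟨ha₀, hle₀⟩, rfl⟩, hsup⟩ :=
      Real.add_neg_lt_sSup (hne.image f) (neg_lt_zero.2 hε)
    obtain ⟨b, hb, hgain⟩ := hgap a₀ ha₀ hle₀
    refine ⟨b, hb, fun a ha => ?_⟩
    rcases lt_or_ge (f a) (F b₀) with hlt | hge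
    · linarith
    · have hle : f a ≤ sSup (f '' {a ∈ S | F b₀ ≤ f a}) :=
        le_csSup (hbdd.mono (Set.image_mono (Set.sep_subset S _))) ⟨a, ⟨ha, hge⟩, rfl⟩
      linarith

lemma sum_update_const_apply {ι κ : Type*} [Fintype ι] [DecidableEq ι] (g : ℝ → ℝ)
    (c c' : κ → ℝ) (a : ι) (j : κ) :
    ∑ i, g (Function.update (fun _ => c) a c' i j) =
      Fintype.card ι * g (c j) + (g (c' j) - g (c j)) := by
  have hentry (i : ι) : g (Function.update (fun _ => c) a c' i j) =
      g (c j) + if i = a then g (c' j) - g (c j) else 0 := by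
    rcases eq_or_ne i a with rfl | hi
    · simp
    · simp [hi]
  simp [hentry, sum_add_distrib]

lemma update_comp_perm_mem_stdSimplex {ι κ : Type*} [DecidableEq ι] [Fintype κ] {c : κ → ℝ}
    (hc : c ∈ stdSimplex ℝ κ) (a : ι) (σ : Equiv.Perm κ) (i : ι) :
    Function.update (fun _ => c) a (c ∘ σ) i ∈ stdSimplex ℝ κ := by
  rcases eq_or_ne i a with rfl | hi
  · rw [Function.update_self]
    exact ⟨fun j => hc.1 (σ j), (Equiv.sum_comp σ c).trans hc.2⟩
  · rwa [Function.update_of_ne hi]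

section Reward

variable {ι κ : Type*} [Fintype ι] [Fintype κ] {g h : ℝ → ℝ}

/-- The team reward `R(A)` of the allocation `A` of agents `ι` to tasks `κ`. -/
def reward (g h : ℝ → ℝ) (A : ι → κ → ℝ) : ℝ :=
  ∑ j, h (∑ i, g (A i j))

lemma reward_const (g h : ℝ → ℝ) (c : κ → ℝ) :
    reward g h (fun _ : ι => c) = ∑ j, h (Fintype.card ι * g (c j)) := by
  simp [reward]

lemma reward_mono (hh : MonotoneOn h (Set.Ici 0)) (hg : MonotoneOn g (Set.Icc 0 1))
    (hg0 : 0 ≤ g 0) {A B : ι → κ → ℝ} (hA : ∀ i j, 0 ≤ A i j) (hB : ∀ i j, B i j ≤ 1)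
    (hAB : ∀ i j, A i j ≤ B i j) : reward g h A ≤ reward g h B := by
  have hgAB (i : ι) (j : κ) : g (A i j) ≤ g (B i j) :=
    hg ⟨hA i j, (hAB i j).trans (hB i j)⟩ ⟨(hA i j).trans (hAB i j), hB i j⟩ (hAB i j)
  have hgA (i : ι) (j : κ) : 0 ≤ g (A i j) :=
    hg0.trans (hg ⟨le_rfl, zero_le_one⟩ ⟨hA i j, (hAB i j).trans (hB i j)⟩ (hA i j))
  exact sum_le_sum fun j _ => hh (sum_nonneg fun i _ => hgA i j)
    (sum_nonneg fun i _ => (hgA i j).trans (hgAB i j)) (sum_le_sum fun i _ => hgAB i j)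

lemma reward_mean_lt (hh : StrictMonoOn h (Set.Ici 0)) (hg : StrictConvexOn ℝ (Set.Icc 0 1) g)
    (hgnonneg : ∀ x ∈ Set.Icc (0 : ℝ) 1, 0 ≤ g x) {A : ι → κ → ℝ}
    (hA : ∀ i j, A i j ∈ Set.Icc 0 1) {a b : ι} (hab : A a ≠ A b) :
    reward g h (fun _ : ι => (Fintype.card ι : ℝ)⁻¹ • ∑ i, A i) < reward g h A := by
  have : Nonempty ι := ⟨a⟩
  have hcard : (0 : ℝ) < Fintype.card ι := Nat.cast_pos.2 Fintype.card_pos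
  have hweight : ∑ _i : ι, (Fintype.card ι : ℝ)⁻¹ = 1 := by simp
  set c := (Fintype.card ι : ℝ)⁻¹ • ∑ i, A i with hc
  have hc_apply (j : κ) : c j = ∑ i, (Fintype.card ι : ℝ)⁻¹ • A i j := by
    simp only [hc, Pi.smul_apply, Finset.sum_apply, smul_sum]
  have hc_mem (j : κ) : c j ∈ Set.Icc (0 : ℝ) 1 := hc_apply j ▸
    (convex_Icc 0 1).sum_mem (fun _ _ => (inv_pos.2 hcard).le) hweight fun i _ => hA i j
  have hcol_le (j : κ) : Fintype.card ι * g (c j) ≤ ∑ i, g (A i j) := by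
    have := hg.convexOn.map_sum_le (fun _ _ => (inv_pos.2 hcard).le) hweight
      fun i (_ : i ∈ univ) => hA i j
    rwa [← hc_apply, ← smul_sum, smul_eq_mul, le_inv_mul_iff₀ hcard] at this
  have hcol_lt (j : κ) (hj : A a j ≠ A b j) : Fintype.card ι * g (c j) < ∑ i, g (A i j) := by
    have := hg.map_sum_lt (fun _ _ => inv_pos.2 hcard) hweight
      (fun i (_ : i ∈ univ) => hA i j) ⟨a, mem_univ a, b, mem_univ b, hj⟩
    rwa [← hc_apply, ← smul_sum, smul_eq_mul, lt_inv_mul_iff₀ hcard] at this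
  have hcol_c (j : κ) : Fintype.card ι * g (c j) ∈ Set.Ici 0 :=
    mul_nonneg hcard.le (hgnonneg _ (hc_mem j))
  have hcol_A (j : κ) : ∑ i, g (A i j) ∈ Set.Ici 0 := sum_nonneg fun i _ => hgnonneg _ (hA i j)
  obtain ⟨j, hj⟩ := Function.ne_iff.1 hab
  rw [reward_const]
  exact sum_lt_sum (fun j _ => hh.monotoneOn (hcol_c j) (hcol_A j) (hcol_le j))
    ⟨j, mem_univ j, hh (hcol_c j) (hcol_A j) (hcol_lt j hj)⟩

lemma exists_ne_mean_eq_uniform [Nontrivial ι] [Nontrivial κ] :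
    ∃ A : ι → κ → ℝ, (∀ i, A i ∈ stdSimplex ℝ κ) ∧ (∃ a b, A a ≠ A b) ∧
      (Fintype.card ι : ℝ)⁻¹ • ∑ i, A i = fun _ => (Fintype.card κ : ℝ)⁻¹ := by
  classical
  obtain ⟨a, b, hab⟩ := exists_pair_ne ι
  obtain ⟨k, l, hkl⟩ := exists_pair_ne κ
  let σ : ι → ℝ := Pi.single a 1 - Pi.single b 1
  let d : κ → ℝ := Pi.single k 1 - Pi.single l 1
  have hσ : ∑ i, σ i = 0 := by simp [σ]
  have hd : ∑ j, d j = 0 := by simp [d]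
  have hσd (i : ι) (j : κ) : 0 ≤ 1 + σ i * d j := by
    simp only [σ, d, Pi.sub_apply, Pi.single_apply]
    split_ifs <;> norm_num
  refine ⟨fun i j => (Fintype.card κ : ℝ)⁻¹ * (1 + σ i * d j), fun i => ⟨fun j => ?_, ?_⟩,
    ⟨a, b, fun heq => ?_⟩, ?_⟩
  · exact mul_nonneg (by positivity) (hσd i j)
  · simp [← mul_sum, sum_add_distrib, hd]
  · have := congrFun heq k
    simp [σ, d, hab, hab.symm, hkl] at this
  · have hcol (j : κ) : ∑ i, (1 + σ i * d j) = Fintype.card ι := by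
      simp [sum_add_distrib, ← sum_mul, hσ]
    ext j
    rw [Pi.smul_apply, Finset.sum_apply, ← mul_sum, hcol, smul_eq_mul, mul_left_comm,
      inv_mul_cancel₀ (Nat.cast_ne_zero.2 Fintype.card_ne_zero), mul_one]

lemma reward_update_swap [DecidableEq ι] [DecidableEq κ] (g h : ℝ → ℝ) (c : κ → ℝ) (a : ι)
    {k l : κ} (hkl : k ≠ l) :
    reward g h (Function.update (fun _ => c) a (c ∘ Equiv.swap k l)) =
      reward g h (fun _ : ι => c) + transferGain h (Fintype.card ι * g (c k))
        (Fintype.card ι * g (c l)) (g (c l) - g (c k)) := by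
  rw [← sub_eq_iff_eq_add', reward_const, reward, ← sum_sub_distrib]
  simp only [sum_update_const_apply, Function.comp_apply]
  rw [Fintype.sum_eq_add k l hkl fun j hj => by simp [Equiv.swap_apply_of_ne_of_ne hj.1 hj.2],
    Equiv.swap_apply_left, Equiv.swap_apply_right, transferGain, sub_add_eq_add_sub]
  ring_nf

lemma transferGain_card_mul_pos [Nontrivial ι] (hh : StrictConcaveOn ℝ (Set.Ici 0) h) {x y : ℝ}
    (hx : 0 ≤ x) (hxy : x < y) :
    0 < transferGain h (Fintype.card ι * x) (Fintype.card ι * y) (y - x) := by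
  have hcard : (1 : ℝ) < Fintype.card ι := Nat.one_lt_cast.2 Fintype.one_lt_card
  have hy : 0 ≤ y := hx.trans hxy.le
  refine transferGain_pos hh (Set.mem_Ici.2 (by positivity)) (Set.mem_Ici.2 (by positivity))
    (sub_pos.2 hxy) ?_
  rw [← mul_sub]
  exact lt_mul_of_one_lt_left (sub_pos.2 hxy) hcard

lemma reward_add_transferGain_le_reward_update_swap [Nontrivial ι] [DecidableEq ι]
    [DecidableEq κ] (hh : ConcaveOn ℝ (Set.Ici 0) h) (hg : MonotoneOn g (Set.Icc 0 1))
    (hg0 : 0 ≤ g 0) {c : κ → ℝ} (hc : ∀ j, c j ∈ Set.Icc 0 1) {x y : ℝ} (hxy : x < y) {k l : κ}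
    (hk : c k ≤ x) (hl : y ≤ c l) (a : ι) :
    reward g h (fun _ : ι => c) +
        transferGain h (Fintype.card ι * g x) (Fintype.card ι * g y) (g y - g x) ≤
      reward g h (Function.update (fun _ => c) a (c ∘ Equiv.swap k l)) := by
  have hkl : k ≠ l := by
    rintro rfl
    linarith
  have hdouble {t : ℝ} (ht : 0 ≤ t) : 2 * t ≤ Fintype.card ι * t :=
    mul_le_mul_of_nonneg_right (Nat.ofNat_le_cast.2 Fintype.one_lt_card) ht
  have hx : x ∈ Set.Icc (0 : ℝ) 1 := ⟨(hc k).1.trans hk, hxy.le.trans (hl.trans (hc l).2)⟩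
  have hy : y ∈ Set.Icc (0 : ℝ) 1 := ⟨hx.1.trans hxy.le, hl.trans (hc l).2⟩
  have hgnonneg (j : κ) : 0 ≤ g (c j) := hg0.trans (hg ⟨le_rfl, zero_le_one⟩ (hc j) (hc j).1)
  have hgk : g (c k) ≤ g x := hg (hc k) hx hk
  have hgxy : g x ≤ g y := hg hx hy hxy.le
  have hgl : g y ≤ g (c l) := hg hy (hc l) hl
  rw [reward_update_swap g h c a hkl]
  refine add_le_add_right (transferGain_mono hh (mul_nonneg (by positivity) (hgnonneg k))
    (mul_nonneg (by positivity) (hgnonneg l)) ?_ ?_ ?_ ?_ ?_ ?_) _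
  · gcongr
  · gcongr
  · linarith
  · linarith [hdouble (sub_nonneg.2 hgxy)]
  · linarith
  · linarith [hdouble (show 0 ≤ g (c l) - g (c k) by linarith)]

lemma continuousAt_reward_const [Nonempty ι] (hh : ConcaveOn ℝ (Set.Ici 0) h)
    (hg : ConvexOn ℝ (Set.Icc 0 1) g) {x : ℝ} (hx : x ∈ Set.Ioo 0 1) (hgx : 0 < g x) :
    ContinuousAt (fun y => reward g h fun (_ : ι) (_ : κ) => y) x := by
  have hgcont : ContinuousAt g x :=
    (interior_Icc (a := (0 : ℝ)) ▸ hg.continuousOn_interior).continuousAt (Ioo_mem_nhds hx.1 hx.2)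
  have hpos : 0 < Fintype.card ι * g x := mul_pos (Nat.cast_pos.2 Fintype.card_pos) hgx
  have hhcont : ContinuousAt h (Fintype.card ι * g x) :=
    (interior_Ici (a := (0 : ℝ)) ▸ hh.continuousOn_interior).continuousAt (Ioi_mem_nhds hpos)
  simp only [reward_const]
  exact tendsto_finsetSum _ fun _ _ =>
    ContinuousAt.comp (f := fun y => Fintype.card ι * g y) hhcont (hgcont.const_mul _)

lemma bddAbove_reward_const (hh : MonotoneOn h (Set.Ici 0)) (hg : MonotoneOn g (Set.Icc 0 1))
    (hg0 : 0 ≤ g 0) :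
    BddAbove ((fun c : κ → ℝ => reward g h fun _ : ι => c) '' stdSimplex ℝ κ) := by
  refine ⟨reward g h fun (_ : ι) (_ : κ) => 1, ?_⟩
  rintro _ ⟨c, hc, rfl⟩
  exact reward_mono hh hg hg0 (fun _ => hc.1) (fun _ _ => le_rfl)
    fun _ j => (mem_Icc_of_mem_stdSimplex hc j).2

lemma exists_le_inv_card_of_mem_stdSimplex [Nonempty κ] {c : κ → ℝ} (hc : c ∈ stdSimplex ℝ κ) :
    ∃ k, c k ≤ (Fintype.card κ : ℝ)⁻¹ := by
  obtain ⟨k, -, hk⟩ := exists_le_of_sum_le (f := c) (g := fun _ => (Fintype.card κ : ℝ)⁻¹)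
    univ_nonempty (by simp [hc.2])
  exact ⟨k, hk⟩

lemma exists_stdSimplex_reward_uniform_lt [Nontrivial ι] [Nontrivial κ]
    (hh : StrictMonoOn h (Set.Ici 0)) (hg : StrictConvexOn ℝ (Set.Icc 0 1) g)
    (hgnonneg : ∀ x ∈ Set.Icc (0 : ℝ) 1, 0 ≤ g x) :
    ∃ A : ι → κ → ℝ, (∀ i, A i ∈ stdSimplex ℝ κ) ∧
      reward g h (fun (_ : ι) (_ : κ) => (Fintype.card κ : ℝ)⁻¹) < reward g h A := by
  obtain ⟨A, hA, ⟨a, b, hab⟩, hmean⟩ := exists_ne_mean_eq_uniform (ι := ι) (κ := κ)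
  exact ⟨A, hA, hmean ▸ reward_mean_lt hh hg hgnonneg
    (fun i => mem_Icc_of_mem_stdSimplex (hA i)) hab⟩

end Reward

theorem stmt6_general {ι κ : Type*} [Fintype ι] [Fintype κ] [Nontrivial ι] [Nontrivial κ]
    {g h : ℝ → ℝ} (hg : StrictConvexOn ℝ (Set.Icc 0 1) g) (hg0 : 0 ≤ g 0)
    (hgmin : IsMinOn g (Set.Icc 0 1) 0) (hh : StrictConcaveOn ℝ (Set.Ici 0) h)
    (hhmono : MonotoneOn h (Set.Ici 0)) :
    ∃ B : ι → κ → ℝ, (∀ i, B i ∈ stdSimplex ℝ κ) ∧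
      ∀ c ∈ stdSimplex ℝ κ, reward g h (fun _ : ι => c) < reward g h B := by
  classical
  have hgmono := strictMonoOn_of_strictConvexOn_of_isMinOn hg (isLeast_Icc zero_le_one) hgmin
  have hgnonneg (x : ℝ) (hx : x ∈ Set.Icc (0 : ℝ) 1) : 0 ≤ g x := hg0.trans (hgmin hx)
  obtain ⟨B₀, hB₀, hlt⟩ := exists_stdSimplex_reward_uniform_lt (ι := ι) (κ := κ)
    (strictMonoOn_of_strictConcaveOn_of_monotoneOn hh hhmono) hg hgnonneg
  set u : ℝ := (Fintype.card κ : ℝ)⁻¹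
  have hu : u ∈ Set.Ioo (0 : ℝ) 1 :=
    ⟨by positivity, inv_lt_one_of_one_lt₀ (Nat.one_lt_cast.2 Fintype.one_lt_card)⟩
  have hgu : 0 < g u :=
    hg0.trans_lt (hgmono ⟨le_rfl, zero_le_one⟩ (Set.Ioo_subset_Icc_self hu) hu.1)
  obtain ⟨y, hyB₀, huy, hy1⟩ : ∃ y, reward g h (fun (_ : ι) (_ : κ) => y) < reward g h B₀ ∧
      u < y ∧ y < 1 :=
    ((((continuousAt_reward_const hh.concaveOn hg.convexOn hu hgu).eventually_lt_const
      hlt).filter_mono nhdsWithin_le_nhds).and (Ioo_mem_nhdsGT hu.2)).exists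
  have hy : y ∈ Set.Icc (0 : ℝ) 1 := ⟨(hu.1.trans huy).le, hy1.le⟩
  have hguy : g u < g y := hgmono (Set.Ioo_subset_Icc_self hu) hy huy
  have hgain : 0 < transferGain h (Fintype.card ι * g u) (Fintype.card ι * g y) (g y - g u) :=
    transferGain_card_mul_pos hh hgu.le hguy
  refine exists_forall_lt_of_gap (T := {A : ι → κ → ℝ | ∀ i, A i ∈ stdSimplex ℝ κ})
    (bddAbove_reward_const hhmono hgmono.monotoneOn hg0) hgain hB₀ fun c hc hle => ?_
  obtain ⟨k, hk⟩ := exists_le_inv_card_of_mem_stdSimplex hc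
  obtain ⟨l, hl⟩ : ∃ l, y ≤ c l := by
    by_contra! hflat
    exact (hle.trans (reward_mono hhmono hgmono.monotoneOn hg0 (fun _ => hc.1)
      (fun _ _ => hy1.le) fun _ j => (hflat j).le)).not_gt hyB₀
  obtain ⟨a⟩ : Nonempty ι := inferInstance
  exact ⟨_, update_comp_perm_mem_stdSimplex hc a (Equiv.swap k l),
    reward_add_transferGain_le_reward_update_swap hh.concaveOn hgmono.monotoneOn hg0
      (mem_Icc_of_mem_stdSimplex hc) huy hk hl a⟩

/-- Convex-concave positive heterogeneity gain: with
`T_j(a_j) = Σ_i g(r_{ij})` for `g : [0,1] → ℝ≥0` strictly convex with `g 0 = 0`,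
and `U(y) = Σ_j h(y_j)` for `h : ℝ≥0 → ℝ` strictly concave, increasing, with
`h 0 = 0`, the heterogeneity gain is positive: some admissible allocation strictly
beats every admissible homogeneous allocation. -/
theorem stmt6 {N M : ℕ} (hN : 2 ≤ N) (hM : 2 ≤ M) (g h : ℝ → ℝ)
    (hg : StrictConvexOn ℝ (Set.Icc 0 1) g)
    (hgnonneg : ∀ x ∈ Set.Icc (0 : ℝ) 1, 0 ≤ g x) (hg0 : g 0 = 0)
    (hh : StrictConcaveOn ℝ (Set.Ici 0) h)
    (hhmono : MonotoneOn h (Set.Ici 0)) (hh0 : h 0 = 0) :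
    ∃ B : Fin N → Fin M → ℝ, Admissible B ∧
      ∀ A : Fin N → Fin M → ℝ, Admissible A → Homogeneous A →
        ∑ j, h (∑ i, g (A i j)) < ∑ j, h (∑ i, g (B i j)) := by
  have : Nontrivial (Fin N) := Fin.nontrivial_iff_two_le.2 hN
  have : Nontrivial (Fin M) := Fin.nontrivial_iff_two_le.2 hM
  obtain ⟨B, hB, hlt⟩ := stmt6_general (ι := Fin N) (κ := Fin M) hg hg0.ge
    (fun x hx => hg0.trans_le (hgnonneg x hx)) hh hhmono
  refine ⟨B, ⟨fun i => (hB i).1, fun i => (hB i).2⟩, fun A hA hhom => ?_⟩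
  obtain ⟨a⟩ : Nonempty (Fin N) := inferInstance
  have hconst : A = fun _ => A a := funext fun i => hhom i a
  exact (congrArg (reward g h) hconst).trans_lt (hlt (A a) ⟨hA.1 a, hA.2 a⟩)
end

section
/- Let N ≥ M ≥ 2 and consider the team reward R(A) = min_{j} max_{i} r_{ij} over admissible allocations. Then the supremum of R over admissible homogeneous allocations equals 1/M, the supremum over all admissible allocations equals 1, and hence the heterogeneity gain is ΔR = (M − 1)/M. -/
open Finset

/-! The smallest entry of a point of the standard simplex is at most its average, which the
barycenter attains, and a homogeneous allocation is one such point repeated by every agent. If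
agents may differ and there are at least as many of them as tasks, each task can be given an agent
that works on nothing else, so that every task reaches the largest possible score `1`. -/

theorem card_mul_iInf_le_sum {κ : Type*} [Fintype κ] (x : κ → ℝ) :
    Fintype.card κ * ⨅ j, x j ≤ ∑ j, x j := by
  simpa only [card_univ, nsmul_eq_mul] using
    card_nsmul_le_sum univ x (⨅ j, x j) fun j _ => ciInf_le (Set.finite_range x).bddBelow j

theorem iInf_le_one_div_card_of_mem_stdSimplex {κ : Type*} [Fintype κ] [Nonempty κ] {x : κ → ℝ}
    (hx : x ∈ stdSimplex ℝ κ) : ⨅ j, x j ≤ 1 / Fintype.card κ := by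
  have hcard : (0 : ℝ) < Fintype.card κ := Nat.cast_pos.2 Fintype.card_pos
  rw [le_div_iff₀' hcard, ← hx.2]
  exact card_mul_iInf_le_sum x

section TeamReward

variable {ι κ : Type*}

/-- The team reward of an allocation of agents `ι` to tasks `κ`, with inner aggregator `max` and
outer aggregator `min`. Neither type need be finite, so these are a supremum and an infimum; in
`ℝ` they have junk value `0` on an empty or unbounded family. -/
noncomputable def teamReward (A : ι → κ → ℝ) : ℝ :=
  ⨅ j, ⨆ i, A i j

theorem teamReward_const [Nonempty ι] (x : κ → ℝ) :
    teamReward (fun _ : ι => x) = ⨅ j, x j := by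
  simp only [teamReward, ciSup_const]

theorem teamReward_le_one [Fintype κ] [Nonempty κ] {A : ι → κ → ℝ}
    (hA : ∀ i, A i ∈ stdSimplex ℝ κ) : teamReward A ≤ 1 := by
  have hscore (j : κ) : ⨆ i, A i j ≤ 1 :=
    Real.iSup_le (fun i => (mem_Icc_of_mem_stdSimplex (hA i) j).2) zero_le_one
  obtain ⟨j⟩ := ‹Nonempty κ›
  exact (ciInf_le (Set.finite_range _).bddBelow j).trans (hscore j)

theorem teamReward_single_of_surjective [DecidableEq κ] [Nonempty κ] {g : ι → κ}
    (hg : Function.Surjective g) : teamReward (fun i => Pi.single (g i) (1 : ℝ)) = 1 := by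
  have hscore (j : κ) : ⨆ i, Pi.single (M := fun _ => ℝ) (g i) 1 j = 1 := by
    obtain ⟨i, rfl⟩ := hg j
    refine IsGreatest.csSup_eq ⟨⟨i, Pi.single_eq_same _ _⟩, Set.forall_mem_range.2 fun i' => ?_⟩
    rw [Pi.single_apply]
    split_ifs <;> norm_num
  simp only [teamReward, hscore, ciInf_const]

variable (ι κ) in
/-- The rewards of all admissible allocations: each agent's row is a point of the standard
simplex. -/
def rewards [Fintype κ] : Set ℝ :=
  {r | ∃ A : ι → κ → ℝ, (∀ i, A i ∈ stdSimplex ℝ κ) ∧ teamReward A = r}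

variable (ι κ) in
/-- The rewards of the admissible allocations in which all agents have the same row. -/
def homogeneousRewards [Fintype κ] : Set ℝ :=
  {r | ∃ A : ι → κ → ℝ,
    (∀ i, A i ∈ stdSimplex ℝ κ) ∧ (∀ i i', A i = A i') ∧ teamReward A = r}

theorem isGreatest_homogeneousRewards [Nonempty ι] [Fintype κ] [Nonempty κ] :
    IsGreatest (homogeneousRewards ι κ) (1 / Fintype.card κ) := by
  constructor
  · have hbary : (fun _ => 1 / (Fintype.card κ : ℝ)) ∈ stdSimplex ℝ κ := by
      rw [one_div]
      exact stdSimplex.barycenter.2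
    exact ⟨fun _ => _, fun _ => hbary, fun _ _ => rfl, by rw [teamReward_const, ciInf_const]⟩
  · rintro _ ⟨A, hA, hhom, rfl⟩
    let i₀ : ι := Classical.arbitrary ι
    have hconst : A = fun _ => A i₀ := funext fun i => hhom i i₀
    rw [hconst, teamReward_const]
    exact iInf_le_one_div_card_of_mem_stdSimplex (hA i₀)

theorem isGreatest_rewards [Fintype κ] [Nonempty κ] {f : κ → ι} (hf : Function.Injective f) :
    IsGreatest (rewards ι κ) 1 := by
  classical
  constructor
  · exact ⟨fun i => Pi.single (Function.invFun f i) 1, fun i => single_mem_stdSimplex ℝ _,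
      teamReward_single_of_surjective (Function.invFun_surjective hf)⟩
  · rintro _ ⟨A, hA, rfl⟩
    exact teamReward_le_one hA

theorem stmt10_general [Fintype κ] [Nonempty κ] {f : κ → ι} (hf : Function.Injective f) :
    IsGreatest (homogeneousRewards ι κ) (1 / Fintype.card κ) ∧
    IsGreatest (rewards ι κ) 1 ∧
    sSup (rewards ι κ) - sSup (homogeneousRewards ι κ) =
      ((Fintype.card κ : ℝ) - 1) / Fintype.card κ := by
  have : Nonempty ι := .map f ‹_›
  have hhom := isGreatest_homogeneousRewards (ι := ι) (κ := κ)
  have hhet := isGreatest_rewards hf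
  refine ⟨hhom, hhet, ?_⟩
  rw [hhet.csSup_eq, hhom.csSup_eq, sub_div, div_self (Nat.cast_ne_zero.2 Fintype.card_ne_zero)]

end TeamReward

theorem admissible_iff_forall_mem_stdSimplex {N M : ℕ} {A : Fin N → Fin M → ℝ} :
    Admissible A ↔ ∀ i, A i ∈ stdSimplex ℝ (Fin M) :=
  forall_and.symm

/-- `U = min`, `T = max`, continuous allocations: for
`N ≥ M ≥ 2`, the best homogeneous reward is `1/M`, the best overall reward is `1`,
and the heterogeneity gain is `ΔR = (M − 1)/M`. -/
theorem stmt10 {N M : ℕ} (hM : 2 ≤ M) (hNM : M ≤ N) :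
    IsGreatest {r : ℝ | ∃ A : Fin N → Fin M → ℝ,
        Admissible A ∧ Homogeneous A ∧ (⨅ j, ⨆ i, A i j) = r} (1 / M) ∧
    IsGreatest {r : ℝ | ∃ A : Fin N → Fin M → ℝ,
        Admissible A ∧ (⨅ j, ⨆ i, A i j) = r} 1 ∧
    sSup {r : ℝ | ∃ A : Fin N → Fin M → ℝ,
        Admissible A ∧ (⨅ j, ⨆ i, A i j) = r} -
      sSup {r : ℝ | ∃ A : Fin N → Fin M → ℝ,
        Admissible A ∧ Homogeneous A ∧ (⨅ j, ⨆ i, A i j) = r} = ((M : ℝ) - 1) / M := by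
  have : Nonempty (Fin M) := Fin.pos_iff_nonempty.1 (by omega)
  simpa only [admissible_iff_forall_mem_stdSimplex, Homogeneous, homogeneousRewards, rewards,
    teamReward, Fintype.card_fin] using stmt10_general (Fin.castLE_injective hNM)
end

section
/- Let N ≥ 1 and M ≥ 2, and consider discrete allocations (each agent assigned to exactly one task) with team reward R(A) = min_{j} (1/N) Σ_{i=1}^N r_{ij}. Then the maximum of R over discrete allocations where all agents pick the same task equals 0, the maximum over all discrete allocations equals ⌊N/M⌋/N (attained by a most-balanced assignment of agents to tasks), and hence the discrete heterogeneity gain is ΔR_D = ⌊N/M⌋/N. -/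
open Finset

/-- A discrete allocation: 0/1 entries, each agent (row) picks exactly one task. -/
def DiscreteAlloc {N M : ℕ} (A : Fin N → Fin M → ℝ) : Prop :=
  (∀ i j, A i j = 0 ∨ A i j = 1) ∧ ∀ i, ∑ j, A i j = 1

/-!
A discrete allocation is the indicator matrix of a function `f` from agents to tasks, and the score
of task `j` is the size of the fiber of `f` over `j` divided by `N`. A homogeneous allocation comes
from a constant `f`, which leaves a task without agents. In general the pigeonhole principle yields
a fiber of size at most `⌊N/M⌋`, while every fiber of `i ↦ i mod M` has size `⌊N/M⌋` or `⌊N/M⌋ + 1`.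
-/

section

variable {N M : ℕ}

/-- The team reward for outer aggregator `U = min` and inner aggregator `T = mean`. It has the junk
value `0` when there are no tasks or no agents. -/
noncomputable def minMeanReward (A : Fin N → Fin M → ℝ) : ℝ :=
  ⨅ j, (∑ i, A i j) / N

/-- The allocation in which agent `i` picks the task `f i`; by `DiscreteAlloc.exists_eq_choiceAlloc`
every discrete allocation has this form. -/
def choiceAlloc (f : Fin N → Fin M) (i : Fin N) (j : Fin M) : ℝ :=
  if f i = j then 1 else 0

/-- The most balanced choice of tasks: agent `i` picks task `i mod M`. -/
def roundRobin [NeZero M] (i : Fin N) : Fin M :=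
  Fin.ofNat M i

theorem discreteAlloc_choiceAlloc (f : Fin N → Fin M) : DiscreteAlloc (choiceAlloc f) :=
  ⟨fun i j => (ite_eq_or_eq (f i = j) 1 0).symm, fun i => by simp [choiceAlloc]⟩

theorem DiscreteAlloc.existsUnique_eq_one {A : Fin N → Fin M → ℝ} (hA : DiscreteAlloc A)
    (i : Fin N) : ∃! j, A i j = 1 := by
  have indicator (j : Fin M) : A i j = if A i j = 1 then 1 else 0 := by
    rcases hA.1 i j with h | h <;> simp [h]
  have card_ones : #{j | A i j = 1} = 1 := by
    have row_sum := hA.2 i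
    rw [sum_congr rfl fun j _ => indicator j, sum_boole] at row_sum
    exact_mod_cast row_sum
  simpa [card_eq_one_iff_existsUnique] using card_ones

theorem DiscreteAlloc.exists_eq_choiceAlloc {A : Fin N → Fin M → ℝ} (hA : DiscreteAlloc A) :
    ∃ f, A = choiceAlloc f := by
  choose f hf hf_unique using hA.existsUnique_eq_one
  refine ⟨f, funext₂ fun i j => ?_⟩
  rcases eq_or_ne (f i) j with rfl | hj
  · simpa [choiceAlloc] using hf i
  · simpa [choiceAlloc, hj] using (hA.1 i j).resolve_right fun h => hj (hf_unique i j h).symm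

theorem homogeneous_choiceAlloc_iff {f : Fin N → Fin M} :
    Homogeneous (choiceAlloc f) ↔ ∀ i i', f i = f i' := by
  constructor
  · intro h i i'
    simpa [choiceAlloc] using congrFun (h i' i) (f i')
  · intro h i i'
    unfold choiceAlloc
    rw [h i i']

theorem minMeanReward_choiceAlloc (f : Fin N → Fin M) :
    minMeanReward (choiceAlloc f) = ⨅ j, (#{i | f i = j} : ℝ) / N := by
  simp only [minMeanReward, choiceAlloc, sum_boole]

theorem minMeanReward_choiceAlloc_le_card_fiber (f : Fin N → Fin M) (j : Fin M) :
    minMeanReward (choiceAlloc f) ≤ (#{i | f i = j} : ℝ) / N := by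
  rw [minMeanReward_choiceAlloc]
  exact ciInf_le (Set.finite_range _).bddBelow j

theorem minMeanReward_choiceAlloc_nonneg (f : Fin N → Fin M) :
    0 ≤ minMeanReward (choiceAlloc f) := by
  rw [minMeanReward_choiceAlloc]
  exact Real.iInf_nonneg fun j => by positivity

theorem minMeanReward_choiceAlloc_of_not_surjective {f : Fin N → Fin M}
    (hf : ¬ Function.Surjective f) : minMeanReward (choiceAlloc f) = 0 := by
  obtain ⟨j, hj⟩ : ∃ j, ∀ i, f i ≠ j := by simpa [Function.Surjective] using hf
  refine le_antisymm ?_ (minMeanReward_choiceAlloc_nonneg f)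
  simpa [hj] using minMeanReward_choiceAlloc_le_card_fiber f j

theorem minMeanReward_choiceAlloc_of_homogeneous [Nontrivial (Fin M)] {f : Fin N → Fin M}
    (hf : Homogeneous (choiceAlloc f)) : minMeanReward (choiceAlloc f) = 0 := by
  refine minMeanReward_choiceAlloc_of_not_surjective fun hsurj => ?_
  obtain ⟨j, j', hne⟩ := exists_pair_ne (Fin M)
  obtain ⟨i, rfl⟩ := hsurj j
  obtain ⟨i', rfl⟩ := hsurj j'
  exact hne (homogeneous_choiceAlloc_iff.1 hf i i')

theorem minMeanReward_choiceAlloc_le [NeZero M] (f : Fin N → Fin M) :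
    minMeanReward (choiceAlloc f) ≤ ((N / M : ℕ) : ℝ) / N := by
  obtain ⟨j, hj⟩ : ∃ j, #{i | f i = j} < N / M + 1 :=
    Fintype.exists_card_fiber_lt_of_card_lt_mul f (by
      simpa only [Fintype.card_fin] using Nat.lt_mul_div_succ N (NeZero.pos M))
  refine (minMeanReward_choiceAlloc_le_card_fiber f j).trans ?_
  gcongr
  exact Nat.lt_succ_iff.1 hj

theorem card_fiber_roundRobin [NeZero M] (j : Fin M) :
    #{i : Fin N | roundRobin i = j} = N / M + if (j : ℕ) < N % M then 1 else 0 := by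
  have fiber_iff (i : Fin N) : roundRobin i = j ↔ i ≡ j [MOD M] := by
    simp [roundRobin, Fin.ext_iff, Nat.ModEq, Nat.mod_eq_of_lt j.isLt]
  calc #{i : Fin N | roundRobin i = j}
      = Nat.count (· ≡ j [MOD M]) N := by
        simp only [fiber_iff, Nat.count_eq_card_filter_range, card_filter]
        exact Fin.sum_univ_eq_sum_range (fun i => if i ≡ j [MOD M] then 1 else 0) N
    _ = N / M + if (j : ℕ) < N % M then 1 else 0 := by
        rw [Nat.count_modEq_card N (NeZero.pos M), Nat.mod_eq_of_lt j.isLt]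

theorem minMeanReward_choiceAlloc_roundRobin [NeZero M] :
    minMeanReward (choiceAlloc (roundRobin : Fin N → Fin M)) = ((N / M : ℕ) : ℝ) / N := by
  refine le_antisymm (minMeanReward_choiceAlloc_le _) ?_
  rw [minMeanReward_choiceAlloc]
  refine le_ciInf fun j => ?_
  gcongr
  exact (Nat.le_add_right _ _).trans_eq (card_fiber_roundRobin j).symm

theorem isGreatest_minMeanReward_homogeneous [Nontrivial (Fin M)] :
    IsGreatest {r : ℝ | ∃ A : Fin N → Fin M → ℝ,
      DiscreteAlloc A ∧ Homogeneous A ∧ minMeanReward A = r} 0 := by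
  constructor
  · obtain ⟨j⟩ : Nonempty (Fin M) := inferInstance
    have hom : Homogeneous (choiceAlloc fun _ : Fin N => j) :=
      homogeneous_choiceAlloc_iff.2 fun _ _ => rfl
    exact ⟨_, discreteAlloc_choiceAlloc _, hom, minMeanReward_choiceAlloc_of_homogeneous hom⟩
  · rintro _ ⟨A, hA, hom, rfl⟩
    obtain ⟨f, rfl⟩ := hA.exists_eq_choiceAlloc
    exact (minMeanReward_choiceAlloc_of_homogeneous hom).le

theorem isGreatest_minMeanReward [NeZero M] :
    IsGreatest {r : ℝ | ∃ A : Fin N → Fin M → ℝ, DiscreteAlloc A ∧ minMeanReward A = r}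
      (((N / M : ℕ) : ℝ) / N) := by
  constructor
  · exact ⟨_, discreteAlloc_choiceAlloc roundRobin, minMeanReward_choiceAlloc_roundRobin⟩
  · rintro _ ⟨A, hA, rfl⟩
    obtain ⟨f, rfl⟩ := hA.exists_eq_choiceAlloc
    exact minMeanReward_choiceAlloc_le f

end

/-- `U = min`, `T = mean`, discrete allocations: for `N ≥ 1`,
`M ≥ 2`, the best homogeneous reward is `0`, the best overall reward is
`⌊N/M⌋/N`, and the discrete heterogeneity gain is `ΔR_D = ⌊N/M⌋/N`. -/
theorem stmt15 {N M : ℕ} (hN : 1 ≤ N) (hM : 2 ≤ M) :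
    IsGreatest {r : ℝ | ∃ A : Fin N → Fin M → ℝ,
        DiscreteAlloc A ∧ Homogeneous A ∧ (⨅ j, (∑ i, A i j) / N) = r} 0 ∧
    IsGreatest {r : ℝ | ∃ A : Fin N → Fin M → ℝ,
        DiscreteAlloc A ∧ (⨅ j, (∑ i, A i j) / N) = r} (((N / M : ℕ) : ℝ) / N) ∧
    sSup {r : ℝ | ∃ A : Fin N → Fin M → ℝ,
        DiscreteAlloc A ∧ (⨅ j, (∑ i, A i j) / N) = r} -
      sSup {r : ℝ | ∃ A : Fin N → Fin M → ℝ,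
        DiscreteAlloc A ∧ Homogeneous A ∧ (⨅ j, (∑ i, A i j) / N) = r} =
      ((N / M : ℕ) : ℝ) / N := by
  have : NeZero M := ⟨by omega⟩
  have : Nontrivial (Fin M) := Fin.nontrivial_iff_two_le.2 hM
  have hhom := isGreatest_minMeanReward_homogeneous (N := N) (M := M)
  have hhet := isGreatest_minMeanReward (N := N) (M := M)
  unfold minMeanReward at hhom hhet
  exact ⟨hhom, hhet, by rw [hhet.csSup_eq, hhom.csSup_eq, sub_zero]⟩
end
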